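/- Let (G, μ) be a weighted graph, let p ∈ [1, ∞), and let Ω ⊊ V be a nonempty proper subset with Ω \ ∂_v Ω nonempty. Then for all r > 0, μ(Ω \ B_r(∂_v Ω)) / μ(Ω) ≤ exp(1 − ν^D_{1,p}(Ω, μ)^{1/p} · r). -/

import Mathlib

open scoped BigOperators Classical

noncomputable section

/-- A weighted graph: a simple connected finite graph together with a symmetric
nonnegative weight which is positive exactly on edges. -/
structure WeightedGraph (V : Type*) [Fintype V] where
  G : SimpleGraph V
  connected : G.Connected
  w : V → V → ℝ
  symm : ∀ x y, w x y = w y x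
  nonneg : ∀ x y, 0 ≤ w x y
  pos_iff_adj : ∀ x y, 0 < w x y ↔ G.Adj x y

namespace WeightedGraph

variable {V : Type*} [Fintype V]

/-- The weight `μ(x)` of a vertex. -/
def vwt (W : WeightedGraph V) (x : V) : ℝ := ∑ y, W.w x y

/-- The weight `μ(A)` of a set of vertices. -/
def swt (W : WeightedGraph V) (A : Set V) : ℝ :=
  ∑ x ∈ Finset.univ.filter (· ∈ A), W.vwt x

/-- The weighted mean of a function. -/
def mean (W : WeightedGraph V) (φ : V → ℝ) : ℝ :=
  (∑ x, φ x * W.vwt x) / W.swt Set.univ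

/-- The `p`-energy of a function. -/
def energy (W : WeightedGraph V) (p : ℝ) (φ : V → ℝ) : ℝ :=
  ∑ x, ∑ y, |φ y - φ x| ^ p * W.w x y

/-- The `k`-th discrete `p`-Poincaré constant. -/
def nu (W : WeightedGraph V) (k : ℕ) (p : ℝ) : ℝ :=
  sInf {s | ∃ L : Submodule ℝ (V → ℝ), Module.finrank ℝ L = k ∧
    (∀ φ ∈ L, (∃ c : ℝ, ∀ x, φ x = c) → φ = 0) ∧
    s = sSup {r | ∃ φ ∈ L, φ ≠ 0 ∧
      r = W.energy p φ / (2 * ∑ x, |φ x - W.mean φ| ^ p * W.vwt x)}}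

/-- The `k`-th discrete modified `p`-Poincaré constant. -/
def nuHat (W : WeightedGraph V) (k : ℕ) (p : ℝ) : ℝ :=
  sInf {s | ∃ L : Submodule ℝ (V → ℝ), Module.finrank ℝ L = k + 1 ∧
    s = sSup {r | ∃ φ ∈ L, φ ≠ 0 ∧
      r = W.energy p φ / (2 * ∑ x, |φ x| ^ p * W.vwt x)}}

/-- The vertex boundary of a set of vertices. -/
def vbdry (W : WeightedGraph V) (Ω : Set V) : Set V :=
  {x ∈ Ω | ∃ y ∉ Ω, 0 < W.w x y}

/-- The `k`-th discrete Dirichlet `p`-Poincaré constant of `Ω`; functions on `Ω`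
vanishing on the vertex boundary are modelled as functions on `V` vanishing
outside `Ω \ ∂ᵥΩ`. -/
def nuD (W : WeightedGraph V) (Ω : Set V) (k : ℕ) (p : ℝ) : ℝ :=
  sInf {s | ∃ L : Submodule ℝ (V → ℝ), Module.finrank ℝ L = k ∧
    (∀ φ ∈ L, ∀ x, x ∉ Ω \ W.vbdry Ω → φ x = 0) ∧
    s = sSup {r | ∃ φ ∈ L, φ ≠ 0 ∧
      r = (∑ x ∈ Finset.univ.filter (· ∈ Ω), ∑ y ∈ Finset.univ.filter (· ∈ Ω),
            |φ y - φ x| ^ p * W.w x y) /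
          (2 * ∑ x ∈ Finset.univ.filter (· ∈ Ω), |φ x| ^ p * W.vwt x)}}

/-- The closed `r`-neighborhood of a set of vertices w.r.t. the graph distance. -/
def ball (W : WeightedGraph V) (A : Set V) (r : ℝ) : Set V :=
  {x | ∃ a ∈ A, (W.G.dist x a : ℝ) ≤ r}

/-- The graph distance between two sets of vertices. -/
def setDist (W : WeightedGraph V) (A B : Set V) : ℕ :=
  sInf {n : ℕ | ∃ a ∈ A, ∃ b ∈ B, W.G.dist a b = n}

end WeightedGraph

/-!
Let `D x` be the distance of `x ∈ Ω` to `∂ᵥΩ`, extended by `0`, and compare two sequences: the mass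
`m n` of `{n < D}` and the weight `e n` of the ordered pairs meeting `{n < D}`. Since `D` changes by
at most `1` along an edge, `e (n + 1) ≤ m n ≤ e n` and `e 0 ≤ μ(Ω)`.

Testing the Poincaré constant `ν` with the truncation of `D` between the levels `s` and `s + k`
gives `2 ν kᵖ m (s + k - 1) ≤ e s - e (s + k)`, because the energy only sees pairs that meet
`{s < D}` but not `{s + k < D}`. Counting pairs rather than vertices is what retains the factor `2`.
With `l = ν ^ (1 / p)` this yields `(1 + 2 (l k)ᵖ) e (s + k) ≤ e s`, so `e` decays by `exp (-l k)`
over `k` levels as soon as `exp (l k) ≤ 1 + 2 (l k)ᵖ`. Since `l ≤ 1`, some multiple of `l` lies in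
an interval `[a, 2 a]`, with `a ≤ 1` depending on `p`, on which this inequality holds.
-/

open Set

/-! ### The step length -/

lemma exp_le_one_add_two_mul_rpow {a b p x : ℝ} (hp : 1 ≤ p) (ha₀ : 0 ≤ a) (hx : x ∈ Icc a b)
    (ha : Real.exp a ≤ 3 + 2 * p * (a - 1)) (hb : Real.exp b ≤ 3 + 2 * p * (b - 1)) :
    Real.exp x ≤ 1 + 2 * x ^ p := by
  have bernoulli : 1 + p * (x - 1) ≤ x ^ p := by
    simpa using one_add_mul_self_le_rpow_one_add (s := x - 1) (by linarith [hx.1]) hp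
  obtain ⟨c, d, hc, hd, hcd, rfl⟩ := (Convex.mem_Icc (hx.1.trans hx.2)).mp hx
  have convexity : Real.exp (c * a + d * b) ≤ c * Real.exp a + d * Real.exp b :=
    convexOn_exp.2 (mem_univ a) (mem_univ b) hc hd hcd
  calc Real.exp (c * a + d * b)
      ≤ c * (3 + 2 * p * (a - 1)) + d * (3 + 2 * p * (b - 1)) := convexity.trans (by gcongr)
    _ = 1 + 2 * (1 + p * (c * a + d * b - 1)) := by linear_combination (3 - 2 * p) * hcd
    _ ≤ 1 + 2 * (c * a + d * b) ^ p := by gcongr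

lemma exp_natCast_div_ten_le (n : ℕ) : Real.exp (n / 10) ≤ 1.1052 ^ n := by
  have exp_tenth : Real.exp (1 / 10) ≤ 1.1052 := by
    refine le_of_pow_le_pow_left₀ (n := 10) (by norm_num) (by norm_num) ?_
    rw [← Real.exp_nat_mul]
    norm_num
    linarith [Real.exp_one_lt_d9]
  rw [div_eq_mul_one_div, Real.exp_nat_mul]
  gcongr

lemma exists_forall_mem_Icc_exp_le {p : ℝ} (hp : 1 ≤ p) :
    ∃ a ∈ Icc (1 / 2 : ℝ) 1, ∀ x ∈ Icc a (2 * a), Real.exp x ≤ 1 + 2 * x ^ p := by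
  have of_tenths (n : ℕ) (hn : n ∈ Icc 5 10)
      (hlow : (1.1052 : ℝ) ^ n ≤ 3 + 2 * p * (n / 10 - 1))
      (hhigh : (1.1052 : ℝ) ^ (2 * n) ≤ 3 + 2 * p * (2 * (n / 10) - 1)) :
      ∃ a ∈ Icc (1 / 2 : ℝ) 1, ∀ x ∈ Icc a (2 * a), Real.exp x ≤ 1 + 2 * x ^ p := by
    have hn₅ : (5 : ℝ) ≤ n := mod_cast hn.1
    have hn₁₀ : (n : ℝ) ≤ 10 := mod_cast hn.2
    refine ⟨n / 10, ⟨by linarith, by linarith⟩, fun x hx ↦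
      exp_le_one_add_two_mul_rpow hp (by positivity) hx
        ((exp_natCast_div_ten_le n).trans hlow) (le_trans ?_ hhigh)⟩
    simpa [mul_div_assoc] using exp_natCast_div_ten_le (2 * n)
  -- `hlow` bounds `p` from above and `hhigh` from below; consecutive ranges of `p` overlap.
  rcases le_total p (7 / 5) with h₁ | h₁
  · exact of_tenths 6 (by simp) (by norm_num; linarith) (by norm_num; linarith)
  rcases le_total p (41 / 25) with h₂ | h₂
  · exact of_tenths 7 (by simp) (by norm_num; linarith) (by norm_num; linarith)
  rcases le_total p (48 / 25) with h₃ | h₃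
  · exact of_tenths 8 (by simp) (by norm_num; linarith) (by norm_num; linarith)
  rcases le_total p (5 / 2) with h₄ | h₄
  · exact of_tenths 9 (by simp) (by norm_num; linarith) (by norm_num; linarith)
  · exact of_tenths 10 (by simp) (by norm_num) (by norm_num; linarith)

lemma exists_nat_mul_mem_Icc {l a : ℝ} (hl : 0 < l) (ha : 0 < a) (hla : l ≤ 2 * a) :
    ∃ d : ℕ, l * d ≤ a ∧ l * (d + 1) ∈ Icc a (2 * a) := by
  obtain ⟨d, hd⟩ := Nat.exists_eq_add_one_of_ne_zero (Nat.ceil_pos.mpr (div_pos ha hl)).ne'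
  have lower : l * d < a := by
    have := Nat.ceil_lt_add_one (div_pos ha hl).le
    rw [hd, Nat.cast_add_one, add_lt_add_iff_right, lt_div_iff₀ hl] at this
    linarith
  have upper : a ≤ l * (d + 1) := by
    have := Nat.le_ceil (a / l)
    rw [hd, Nat.cast_add_one, div_le_iff₀ hl] at this
    linarith
  refine ⟨d, lower.le, upper, ?_⟩
  rcases Nat.eq_zero_or_pos d with rfl | hd
  · simpa using hla
  · have : l ≤ l * d := le_mul_of_one_le_right hl.le (mod_cast hd)
    linarith

lemma exists_nat_exp_mul_le {l p : ℝ} (hl₀ : 0 ≤ l) (hl₁ : l ≤ 1) (hp : 1 ≤ p) :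
    ∃ d : ℕ, l * d ≤ 1 ∧ Real.exp (l * (d + 1)) ≤ 1 + 2 * (l * (d + 1)) ^ p := by
  rcases hl₀.eq_or_lt with rfl | hl
  · exact ⟨0, by simp, by simp [Real.zero_rpow (by linarith : p ≠ 0)]⟩
  obtain ⟨a, ⟨ha, ha₁⟩, h⟩ := exists_forall_mem_Icc_exp_le hp
  obtain ⟨d, hd, hmem⟩ := exists_nat_mul_mem_Icc (a := a) hl (by linarith) (by linarith)
  exact ⟨d, hd.trans ha₁, h _ hmem⟩

lemma exp_sub_one_le_two_mul_rpow {p x : ℝ} (hp : 0 ≤ p) (hx : 1 ≤ x)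
    (h : Real.exp x ≤ 1 + 2 * x ^ p) : Real.exp (x - 1) ≤ 2 * x ^ p := by
  have hpow : 1 ≤ x ^ p := Real.one_le_rpow hx hp
  rw [Real.exp_sub, div_le_iff₀ (Real.exp_pos 1)]
  nlinarith [Real.exp_one_gt_d9]

/-! ### Exponential decay of interlaced sequences -/

section Decay

variable {m e : ℕ → ℝ} {l p : ℝ}

lemma le_mul_exp_neg_of_exp_le {d : ℕ} (hl : 0 ≤ l) (he : ∀ n, 0 ≤ e n)
    (hem : ∀ n, e (n + 1) ≤ m n)
    (hdrop : ∀ s k : ℕ, 2 * (l * (k + 1)) ^ p * m (s + k) ≤ e s - e (s + k + 1))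
    (hd : Real.exp (l * (d + 1)) ≤ 1 + 2 * (l * (d + 1)) ^ p) (q : ℕ) :
    e (q * (d + 1)) ≤ e 0 * Real.exp (-(l * (q * (d + 1)))) := by
  induction q with
  | zero => simp
  | succ q ih =>
    have hstep : Real.exp (l * (d + 1)) * e ((q + 1) * (d + 1)) ≤ e (q * (d + 1)) := by
      rw [show (q + 1) * (d + 1) = q * (d + 1) + d + 1 by ring]
      calc Real.exp (l * (d + 1)) * e (q * (d + 1) + d + 1)
          ≤ (1 + 2 * (l * (d + 1)) ^ p) * e (q * (d + 1) + d + 1) := by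
            gcongr
            exact he _
        _ ≤ e (q * (d + 1) + d + 1) + 2 * (l * (d + 1)) ^ p * m (q * (d + 1) + d) := by
            rw [add_mul, one_mul]
            gcongr
            exact hem _
        _ ≤ e (q * (d + 1)) := by linarith [hdrop (q * (d + 1)) d]
    calc e ((q + 1) * (d + 1))
        ≤ e (q * (d + 1)) * Real.exp (-(l * (d + 1))) := by
          rwa [Real.exp_neg, ← div_eq_mul_inv, le_div_iff₀' (Real.exp_pos _)]
      _ ≤ e 0 * Real.exp (-(l * (q * (d + 1)))) * Real.exp (-(l * (d + 1))) := by gcongr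
      _ = e 0 * Real.exp (-(l * ((q + 1 : ℕ) * (d + 1)))) := by
          rw [mul_assoc, ← Real.exp_add]
          push_cast
          ring_nf

lemma le_mul_exp_one_sub_of_le {d i : ℕ} (hl : 0 ≤ l) (hp : 0 ≤ p) (hm : ∀ n, 0 ≤ m n)
    (hme : ∀ n, m n ≤ e n) (hanti : Antitone e)
    (hdrop : ∀ s k : ℕ, 2 * (l * (k + 1)) ^ p * m (s + k) ≤ e s - e (s + k + 1))
    (hd₁ : l * d ≤ 1) (hd : Real.exp (l * (d + 1)) ≤ 1 + 2 * (l * (d + 1)) ^ p) (hi : i ≤ d)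
    (s : ℕ) :
    m (s + i) ≤ e s * Real.exp (1 - l * (i + 1)) := by
  have he (n : ℕ) : 0 ≤ e n := (hm n).trans (hme n)
  rcases le_or_gt (l * (i + 1)) 1 with hle | hgt
  · calc m (s + i) ≤ e s := (hme _).trans (hanti (Nat.le_add_right s i))
      _ ≤ e s * Real.exp (1 - l * (i + 1)) :=
        le_mul_of_one_le_right (he s) (Real.one_le_exp (by linarith))
  · have hid : i = d := by
      refine hi.eq_of_not_lt fun hlt ↦ hgt.not_ge (le_trans ?_ hd₁)
      gcongr
      exact_mod_cast hlt
    subst hid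
    rw [← neg_sub, Real.exp_neg, ← div_eq_mul_inv, le_div_iff₀' (Real.exp_pos _)]
    calc Real.exp (l * (i + 1) - 1) * m (s + i)
        ≤ 2 * (l * (i + 1)) ^ p * m (s + i) := by
          gcongr
          · exact hm _
          · exact exp_sub_one_le_two_mul_rpow hp hgt.le hd
      _ ≤ e s := by linarith [hdrop s i, he (s + i + 1)]

theorem le_mul_exp_one_sub_of_interlaced (hl₀ : 0 ≤ l) (hl₁ : l ≤ 1) (hp : 1 ≤ p)
    (hm : ∀ n, 0 ≤ m n) (hme : ∀ n, m n ≤ e n) (hem : ∀ n, e (n + 1) ≤ m n)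
    (hdrop : ∀ s k : ℕ, 2 * (l * (k + 1)) ^ p * m (s + k) ≤ e s - e (s + k + 1)) (n : ℕ) :
    m n ≤ e 0 * Real.exp (1 - l * (n + 1)) := by
  obtain ⟨d, hd₁, hd⟩ := exists_nat_exp_mul_le hl₀ hl₁ hp
  have hanti : Antitone e := antitone_nat_of_succ_le fun n ↦ (hem n).trans (hme n)
  obtain ⟨q, i, hi, rfl⟩ : ∃ q i : ℕ, i ≤ d ∧ n = q * (d + 1) + i :=
    ⟨n / (d + 1), n % (d + 1), Nat.le_of_lt_succ (Nat.mod_lt n d.succ_pos),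
      (Nat.div_add_mod' n (d + 1)).symm⟩
  calc m (q * (d + 1) + i)
      ≤ e (q * (d + 1)) * Real.exp (1 - l * (i + 1)) :=
        le_mul_exp_one_sub_of_le hl₀ (by linarith) hm hme hanti hdrop hd₁ hd hi _
    _ ≤ e 0 * Real.exp (-(l * (q * (d + 1)))) * Real.exp (1 - l * (i + 1)) := by
        gcongr
        exact le_mul_exp_neg_of_exp_le hl₀ (fun n ↦ (hm n).trans (hme n)) hem hdrop hd q
    _ = e 0 * Real.exp (1 - l * ((q * (d + 1) + i : ℕ) + 1)) := by
        rw [mul_assoc, ← Real.exp_add]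
        push_cast
        ring_nf

end Decay

namespace WeightedGraph

variable {V : Type*} [Fintype V] (W : WeightedGraph V)

/-! ### Weights of vertices and of pairs -/

lemma vwt_nonneg (x : V) : 0 ≤ W.vwt x :=
  Finset.sum_nonneg fun y _ ↦ W.nonneg x y

lemma swt_nonneg (A : Set V) : 0 ≤ W.swt A :=
  Finset.sum_nonneg fun x _ ↦ W.vwt_nonneg x

lemma swt_mono {A B : Set V} (h : A ⊆ B) : W.swt A ≤ W.swt B :=
  Finset.sum_le_sum_of_subset_of_nonneg (Finset.monotone_filter_right _ fun _ _ hx ↦ h hx)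
    fun x _ _ ↦ W.vwt_nonneg x

lemma swt_eq_sum_ite (A : Set V) : W.swt A = ∑ x, ∑ y, if x ∈ A then W.w x y else 0 := by
  simp only [swt, vwt, Finset.sum_filter, Finset.sum_ite_irrel, Finset.sum_const_zero]

/-- The weight of the ordered pairs of vertices with at least one member in `A`: an edge with both
endpoints in `A` counts twice, and so does an edge with one endpoint in `A`. -/
def incidentWt (A : Set V) : ℝ := ∑ x, ∑ y, if x ∈ A ∨ y ∈ A then W.w x y else 0

lemma swt_le_incidentWt (A : Set V) : W.swt A ≤ W.incidentWt A := by
  rw [swt_eq_sum_ite, incidentWt]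
  gcongr with x _ y _
  have := W.nonneg x y
  split_ifs <;> simp_all

lemma incidentWt_le_two_mul_swt (A : Set V) : W.incidentWt A ≤ 2 * W.swt A := by
  have hswap : W.swt A = ∑ x, ∑ y, if y ∈ A then W.w x y else 0 := by
    rw [swt_eq_sum_ite, Finset.sum_comm]
    simp only [W.symm]
  calc W.incidentWt A
      ≤ ∑ x, ∑ y, ((if x ∈ A then W.w x y else 0) + if y ∈ A then W.w x y else 0) := by
        rw [incidentWt]
        gcongr with x _ y _
        have := W.nonneg x y
        split_ifs <;> simp_all
    _ = 2 * W.swt A := by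
        simp only [Finset.sum_add_distrib]
        rw [← swt_eq_sum_ite, ← hswap, two_mul]

lemma w_eq_zero_of_not_adj {x y : V} (h : ¬W.G.Adj x y) : W.w x y = 0 :=
  (W.nonneg x y).antisymm' (not_lt.mp (mt (W.pos_iff_adj x y).mp h))

lemma incidentWt_le_swt {A B : Set V} (hAB : A ⊆ B)
    (hadj : ∀ x ∈ A, ∀ y, W.G.Adj x y → y ∈ B) : W.incidentWt A ≤ W.swt B := by
  rw [swt_eq_sum_ite, incidentWt]
  gcongr with x _ y _
  by_cases hxy : W.G.Adj x y
  · have := W.nonneg x y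
    split_ifs with hA hB
    · exact le_rfl
    · exact absurd (hA.elim (fun hx ↦ hAB hx) fun hy ↦ hadj y hy x hxy.symm) hB
    · exact this
    · exact le_rfl
  · simp [W.w_eq_zero_of_not_adj hxy]

/-! ### The first Dirichlet constant as a lower bound of Rayleigh quotients -/

/-- The `p`-Rayleigh quotient of `φ` on `Ω`, whose infimum over the nonzero functions vanishing
outside `Ω \ ∂ᵥΩ` is the first Dirichlet `p`-Poincaré constant. -/
def dirichletQuotient (Ω : Set V) (p : ℝ) (φ : V → ℝ) : ℝ :=
  (∑ x ∈ Finset.univ.filter (· ∈ Ω), ∑ y ∈ Finset.univ.filter (· ∈ Ω),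
      |φ y - φ x| ^ p * W.w x y) /
    (2 * ∑ x ∈ Finset.univ.filter (· ∈ Ω), |φ x| ^ p * W.vwt x)

variable {Ω : Set V} {p : ℝ} {φ : V → ℝ}

lemma rpow_abs_mul_vwt_nonneg (x : V) : 0 ≤ |φ x| ^ p * W.vwt x :=
  mul_nonneg (by positivity) (W.vwt_nonneg x)

lemma rpow_abs_sub_mul_w_nonneg (x y : V) : 0 ≤ |φ y - φ x| ^ p * W.w x y :=
  mul_nonneg (by positivity) (W.nonneg x y)

variable (Ω p φ) in
lemma dirichletQuotient_nonneg : 0 ≤ W.dirichletQuotient Ω p φ :=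
  div_nonneg
    (Finset.sum_nonneg fun x _ ↦ Finset.sum_nonneg fun y _ ↦ W.rpow_abs_sub_mul_w_nonneg x y)
    (mul_nonneg zero_le_two (Finset.sum_nonneg fun x _ ↦ W.rpow_abs_mul_vwt_nonneg x))

variable (Ω p φ) in
lemma dirichletQuotient_smul {c : ℝ} (hc : c ≠ 0) :
    W.dirichletQuotient Ω p (c • φ) = W.dirichletQuotient Ω p φ := by
  have hcp : |c| ^ p ≠ 0 := (Real.rpow_pos_of_pos (abs_pos.mpr hc) p).ne'
  simp only [dirichletQuotient, Pi.smul_apply, smul_eq_mul, ← mul_sub, abs_mul,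
    Real.mul_rpow (abs_nonneg c) (abs_nonneg _), mul_assoc, ← Finset.mul_sum]
  rw [mul_left_comm, mul_div_mul_left _ _ hcp]

lemma sSup_dirichletQuotient_nonneg (L : Submodule ℝ (V → ℝ)) :
    0 ≤ sSup {r | ∃ φ ∈ L, φ ≠ 0 ∧ r = W.dirichletQuotient Ω p φ} := by
  apply Real.sSup_nonneg
  rintro _ ⟨φ, -, -, rfl⟩
  exact W.dirichletQuotient_nonneg Ω p φ

variable (Ω p) in
lemma nuD_nonneg (k : ℕ) : 0 ≤ W.nuD Ω k p := by
  apply Real.sInf_nonneg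
  rintro _ ⟨L, -, -, rfl⟩
  exact W.sSup_dirichletQuotient_nonneg L

lemma nuD_one_le_dirichletQuotient (hφ : φ ≠ 0) (hsupp : ∀ x, x ∉ Ω \ W.vbdry Ω → φ x = 0) :
    W.nuD Ω 1 p ≤ W.dirichletQuotient Ω p φ := by
  have hbdd : ∀ s ∈ {s | ∃ L : Submodule ℝ (V → ℝ), Module.finrank ℝ L = 1 ∧
      (∀ φ ∈ L, ∀ x, x ∉ Ω \ W.vbdry Ω → φ x = 0) ∧
      s = sSup {r | ∃ φ ∈ L, φ ≠ 0 ∧ r = W.dirichletQuotient Ω p φ}}, 0 ≤ s := by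
    rintro _ ⟨L, -, -, rfl⟩
    exact W.sSup_dirichletQuotient_nonneg L
  have hspan : ∀ ψ ∈ Submodule.span ℝ {φ}, ∀ x, x ∉ Ω \ W.vbdry Ω → ψ x = 0 := by
    intro ψ hψ x hx
    obtain ⟨c, rfl⟩ := Submodule.mem_span_singleton.mp hψ
    simp [hsupp x hx]
  refine (csInf_le ⟨0, hbdd⟩ ⟨Submodule.span ℝ {φ}, finrank_span_singleton hφ, hspan, rfl⟩).trans
    (Real.sSup_le ?_ (W.dirichletQuotient_nonneg Ω p φ))
  rintro _ ⟨ψ, hψ, hψ₀, rfl⟩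
  obtain ⟨c, rfl⟩ := Submodule.mem_span_singleton.mp hψ
  exact (W.dirichletQuotient_smul Ω p φ (left_ne_zero_of_smul hψ₀)).le

lemma nuD_one_mul_le_energy (hp : p ≠ 0) (hsupp : ∀ x, x ∉ Ω \ W.vbdry Ω → φ x = 0) :
    W.nuD Ω 1 p * (2 * ∑ x, |φ x| ^ p * W.vwt x) ≤ W.energy p φ := by
  have henergy : (∑ x ∈ Finset.univ.filter (· ∈ Ω), ∑ y ∈ Finset.univ.filter (· ∈ Ω),
      |φ y - φ x| ^ p * W.w x y) ≤ W.energy p φ :=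
    (Finset.sum_le_sum fun x _ ↦ Finset.sum_le_univ_sum_of_nonneg
        fun y ↦ W.rpow_abs_sub_mul_w_nonneg x y).trans
      (Finset.sum_le_univ_sum_of_nonneg
        fun x ↦ Finset.sum_nonneg fun y _ ↦ W.rpow_abs_sub_mul_w_nonneg x y)
  have hnorm : ∑ x ∈ Finset.univ.filter (· ∈ Ω), |φ x| ^ p * W.vwt x =
      ∑ x, |φ x| ^ p * W.vwt x := by
    refine Finset.sum_filter_of_ne fun x _ hx ↦ ?_
    by_contra hxΩ
    simp [hsupp x fun h ↦ hxΩ h.1, Real.zero_rpow hp] at hx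
  have hnorm_nonneg : 0 ≤ ∑ x, |φ x| ^ p * W.vwt x :=
    Finset.sum_nonneg fun x _ ↦ W.rpow_abs_mul_vwt_nonneg x
  rcases hnorm_nonneg.eq_or_lt with hzero | hpos
  · rw [← hzero, mul_zero, mul_zero]
    exact Finset.sum_nonneg fun x _ ↦ Finset.sum_nonneg fun y _ ↦ W.rpow_abs_sub_mul_w_nonneg x y
  · have hφ : φ ≠ 0 := by
      rintro rfl
      simp [Real.zero_rpow hp] at hpos
    refine le_trans ?_ henergy
    rw [← le_div_iff₀ (by positivity), ← hnorm]
    exact W.nuD_one_le_dirichletQuotient hφ hsupp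

/-! ### Truncations of a height function -/

section Height

variable {D : V → ℕ}

/-- The truncation of `D` between the levels `s` and `s + k`, shifted to take values in `[0, k]`.
The subtraction is that of `ℕ`, so the value is `0` where `D ≤ s`. -/
def ramp (D : V → ℕ) (s k : ℕ) (x : V) : ℝ := (min (D x - s) k : ℕ)

lemma rpow_abs_ramp_sub_mul_w_le (hp : 0 < p) (hD : ∀ x y, W.G.Adj x y → D x ≤ D y + 1)
    (s k : ℕ) (x y : V) :
    |ramp D s k y - ramp D s k x| ^ p * W.w x y ≤
      (if s < D x ∨ s < D y then W.w x y else 0) -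
        if s + k < D x ∨ s + k < D y then W.w x y else 0 := by
  by_cases hxy : W.G.Adj x y
  swap
  · simp [W.w_eq_zero_of_not_adj hxy]
  have hw := W.nonneg x y
  have hDxy := hD x y hxy
  have hDyx := hD y x hxy.symm
  rcases eq_or_ne (min (D y - s) k) (min (D x - s) k) with heq | hne
  · rw [ramp, ramp, heq, sub_self, abs_zero, Real.zero_rpow hp.ne', zero_mul, sub_nonneg]
    split_ifs <;> first | omega | linarith
  · have habs : |ramp D s k y - ramp D s k x| ≤ 1 := by
      rw [ramp, ramp, abs_sub_le_iff, sub_le_iff_le_add, sub_le_iff_le_add]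
      norm_cast
      omega
    rw [if_pos (by omega), if_neg (by omega), sub_zero]
    exact mul_le_of_le_one_left hw (Real.rpow_le_one (abs_nonneg _) habs hp.le)

lemma energy_ramp_le (hp : 0 < p) (hD : ∀ x y, W.G.Adj x y → D x ≤ D y + 1) (s k : ℕ) :
    W.energy p (ramp D s k) ≤
      W.incidentWt {x | s < D x} - W.incidentWt {x | s + k < D x} := by
  simp only [energy, incidentWt, mem_ofPred_eq, ← Finset.sum_sub_distrib]
  refine Finset.sum_le_sum fun x _ ↦ Finset.sum_le_sum fun y _ ↦ ?_
  refine (W.rpow_abs_ramp_sub_mul_w_le hp hD s k x y).trans_eq ?_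
  -- The two sides differ only in their decidability instances.
  congr

lemma rpow_mul_swt_le_sum_ramp (s k : ℕ) :
    (k : ℝ) ^ p * W.swt {x | s + k ≤ D x} ≤ ∑ x, |ramp D s k x| ^ p * W.vwt x := by
  rw [swt, Finset.mul_sum]
  refine (Finset.sum_le_sum fun x hx ↦ ?_).trans
    (Finset.sum_le_univ_sum_of_nonneg fun x ↦ W.rpow_abs_mul_vwt_nonneg x)
  have hx : s + k ≤ D x := by simpa using hx
  rw [ramp, min_eq_right (by omega), Nat.abs_cast]

lemma two_mul_nuD_one_mul_swt_le (hp : 0 < p) (hD : ∀ x y, W.G.Adj x y → D x ≤ D y + 1)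
    (hD₀ : ∀ x, x ∉ Ω \ W.vbdry Ω → D x = 0) (s k : ℕ) :
    2 * (W.nuD Ω 1 p * k ^ p) * W.swt {x | s + k ≤ D x} ≤
      W.incidentWt {x | s < D x} - W.incidentWt {x | s + k < D x} := by
  have hsupp : ∀ x, x ∉ Ω \ W.vbdry Ω → ramp D s k x = 0 := fun x hx ↦ by simp [ramp, hD₀ x hx]
  calc 2 * (W.nuD Ω 1 p * k ^ p) * W.swt {x | s + k ≤ D x}
      = W.nuD Ω 1 p * (2 * (k ^ p * W.swt {x | s + k ≤ D x})) := by ring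
    _ ≤ W.nuD Ω 1 p * (2 * ∑ x, |ramp D s k x| ^ p * W.vwt x) := by
        gcongr
        · exact W.nuD_nonneg Ω p 1
        · exact W.rpow_mul_swt_le_sum_ramp s k
    _ ≤ W.energy p (ramp D s k) := W.nuD_one_mul_le_energy hp.ne' hsupp
    _ ≤ W.incidentWt {x | s < D x} - W.incidentWt {x | s + k < D x} := W.energy_ramp_le hp hD s k

lemma nuD_one_le_one (hp : 0 < p) (hD : ∀ x y, W.G.Adj x y → D x ≤ D y + 1)
    (hD₀ : ∀ x, x ∉ Ω \ W.vbdry Ω → D x = 0) (hpos : 0 < W.swt {x | 0 < D x}) :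
    W.nuD Ω 1 p ≤ 1 := by
  have htest : 2 * W.nuD Ω 1 p * W.swt {x | 0 < D x} ≤
      W.incidentWt {x | 0 < D x} - W.incidentWt {x | 1 < D x} := by
    simpa [Nat.one_le_iff_ne_zero, Nat.pos_iff_ne_zero] using
      W.two_mul_nuD_one_mul_swt_le hp hD hD₀ 0 1
  have hle : W.nuD Ω 1 p * W.swt {x | 0 < D x} ≤ 1 * W.swt {x | 0 < D x} := by
    linarith [W.incidentWt_le_two_mul_swt {x | 0 < D x}, W.swt_nonneg {x | 1 < D x},
      W.swt_le_incidentWt {x | 1 < D x}]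
  exact le_of_mul_le_mul_right hle hpos

lemma incidentWt_pos_le_swt (hD₀ : ∀ x, x ∉ Ω \ W.vbdry Ω → D x = 0) :
    W.incidentWt {x | 0 < D x} ≤ W.swt Ω := by
  have hinterior : ∀ x, 0 < D x → x ∈ Ω \ W.vbdry Ω := fun x hx ↦
    by_contra fun h ↦ hx.ne' (hD₀ x h)
  refine W.incidentWt_le_swt (fun x hx ↦ (hinterior x hx).1) fun x hx y hxy ↦ ?_
  by_contra hy
  exact (hinterior x hx).2 ⟨(hinterior x hx).1, y, hy, (W.pos_iff_adj x y).mpr hxy⟩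

theorem swt_superlevel_le (hp : 1 ≤ p) (hD : ∀ x y, W.G.Adj x y → D x ≤ D y + 1)
    (hD₀ : ∀ x, x ∉ Ω \ W.vbdry Ω → D x = 0) (n : ℕ) :
    W.swt {x | n < D x} ≤ W.swt Ω * Real.exp (1 - W.nuD Ω 1 p ^ (1 / p) * (n + 1)) := by
  have hp₀ : 0 < p := by linarith
  rcases (W.swt_nonneg {x | 0 < D x}).eq_or_lt with hzero | hpos
  · calc W.swt {x | n < D x} ≤ W.swt {x | 0 < D x} := W.swt_mono fun x hx ↦ Nat.zero_lt_of_lt hx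
      _ = 0 := hzero.symm
      _ ≤ _ := mul_nonneg (W.swt_nonneg Ω) (Real.exp_pos _).le
  have hν := W.nuD_nonneg Ω p 1
  have hdrop (s k : ℕ) : 2 * (W.nuD Ω 1 p ^ (1 / p) * (k + 1)) ^ p * W.swt {x | s + k < D x} ≤
      W.incidentWt {x | s < D x} - W.incidentWt {x | s + k + 1 < D x} := by
    rw [Real.mul_rpow (by positivity) (by positivity), one_div, Real.rpow_inv_rpow hν hp₀.ne']
    exact_mod_cast W.two_mul_nuD_one_mul_swt_le hp₀ hD hD₀ s (k + 1)
  have hinterlace (n : ℕ) : W.incidentWt {x | n + 1 < D x} ≤ W.swt {x | n < D x} :=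
    W.incidentWt_le_swt (fun x hx ↦ Nat.lt_of_succ_lt hx) fun x hx y hxy ↦
      Nat.lt_of_succ_lt_succ (lt_of_lt_of_le hx (hD x y hxy))
  calc W.swt {x | n < D x}
      ≤ W.incidentWt {x | 0 < D x} * Real.exp (1 - W.nuD Ω 1 p ^ (1 / p) * (n + 1)) :=
        le_mul_exp_one_sub_of_interlaced (m := fun n ↦ W.swt {x | n < D x})
          (e := fun n ↦ W.incidentWt {x | n < D x}) (by positivity)
          (Real.rpow_le_one hν (W.nuD_one_le_one hp₀ hD hD₀ hpos) (by positivity)) hp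
          (fun n ↦ W.swt_nonneg _) (fun n ↦ W.swt_le_incidentWt _) hinterlace hdrop n
    _ ≤ W.swt Ω * Real.exp (1 - W.nuD Ω 1 p ^ (1 / p) * (n + 1)) := by
        gcongr
        exact W.incidentWt_pos_le_swt hD₀

end Height

/-! ### The distance to the vertex boundary -/

lemma vbdry_nonempty (hne : Ω.Nonempty) (hproper : Ω ≠ univ) : (W.vbdry Ω).Nonempty := by
  obtain ⟨a, ha⟩ := hne
  obtain ⟨b, hb⟩ := (ne_univ_iff_exists_notMem Ω).mp hproper
  obtain ⟨walk⟩ := W.connected.preconnected a b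
  obtain ⟨d, -, hfst, hsnd⟩ := walk.exists_boundary_dart Ω ha hb
  exact ⟨d.fst, hfst, d.snd, hsnd, (W.pos_iff_adj _ _).mpr d.adj⟩

/-- The distance from a vertex of `Ω` to `∂ᵥΩ`, extended by `0` outside `Ω` so that it vanishes off
`Ω \ ∂ᵥΩ`, as the test functions of the Dirichlet constant must. -/
def depth (Ω : Set V) (x : V) : ℕ := if x ∈ Ω then W.setDist {x} (W.vbdry Ω) else 0

lemma depth_le_dist {a : V} (x : V) (ha : a ∈ W.vbdry Ω) : W.depth Ω x ≤ W.G.dist x a := by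
  unfold depth
  split_ifs
  · exact Nat.sInf_le ⟨x, rfl, a, ha, rfl⟩
  · exact Nat.zero_le _

lemma exists_dist_eq_depth {x : V} (hb : (W.vbdry Ω).Nonempty) (hx : x ∈ Ω) :
    ∃ a ∈ W.vbdry Ω, W.G.dist x a = W.depth Ω x := by
  obtain ⟨b, hb⟩ := hb
  obtain ⟨_, rfl, a, ha, hdist⟩ : W.setDist {x} (W.vbdry Ω) ∈
      {n | ∃ y ∈ ({x} : Set V), ∃ a ∈ W.vbdry Ω, W.G.dist y a = n} :=
    Nat.sInf_mem ⟨_, x, rfl, b, hb, rfl⟩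
  exact ⟨a, ha, by rw [hdist, depth, if_pos hx]⟩

lemma depth_eq_zero (x : V) (hx : x ∉ Ω \ W.vbdry Ω) : W.depth Ω x = 0 := by
  by_cases hxΩ : x ∈ Ω
  · have hxb : x ∈ W.vbdry Ω := by_contra fun h ↦ hx ⟨hxΩ, h⟩
    simpa using W.depth_le_dist x hxb
  · exact if_neg hxΩ

lemma depth_le_depth_add_one (hb : (W.vbdry Ω).Nonempty) (x y : V) (hxy : W.G.Adj x y) :
    W.depth Ω x ≤ W.depth Ω y + 1 := by
  by_cases hy : y ∈ Ω
  · obtain ⟨a, ha, hya⟩ := W.exists_dist_eq_depth hb hy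
    calc W.depth Ω x ≤ W.G.dist x a := W.depth_le_dist x ha
      _ ≤ W.G.dist x y + W.G.dist y a := W.connected.dist_triangle
      _ = W.depth Ω y + 1 := by rw [hya, SimpleGraph.dist_eq_one_iff_adj.mpr hxy, add_comm]
  · have hx : x ∉ Ω \ W.vbdry Ω := fun h ↦ h.2 ⟨h.1, y, hy, (W.pos_iff_adj x y).mpr hxy⟩
    simp [W.depth_eq_zero x hx]

lemma diff_ball_vbdry_subset {r : ℝ} (hb : (W.vbdry Ω).Nonempty) (hr : 0 ≤ r) :
    Ω \ W.ball (W.vbdry Ω) r ⊆ {x | ⌊r⌋₊ < W.depth Ω x} := by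
  rintro x ⟨hx, hxball⟩
  obtain ⟨a, ha, hxa⟩ := W.exists_dist_eq_depth hb hx
  rw [mem_ofPred_eq, Nat.floor_lt hr, ← hxa]
  exact not_le.mp fun hle ↦ hxball ⟨a, ha, hle⟩

end WeightedGraph

open WeightedGraph in
/-- Discrete boundary concentration inequality (Lemma 8.3): for a nonempty
proper subset `Ω ⊊ V` with nonempty interior `Ω \ ∂ᵥΩ` and any `r > 0`,
`μ(Ω \ B_r(∂ᵥΩ)) / μ(Ω) ≤ exp(1 - ν^D_{1,p}(Ω,μ)^{1/p} r)`. -/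
theorem discrete_boundary_concentration
    {V : Type*} [Fintype V] (W : WeightedGraph V) (p : ℝ) (hp : 1 ≤ p)
    (Ω : Set V) (hne : Ω.Nonempty) (hproper : Ω ≠ Set.univ)
    (hint : (Ω \ W.vbdry Ω).Nonempty)
    (r : ℝ) (hr : 0 < r) :
    W.swt (Ω \ W.ball (W.vbdry Ω) r) / W.swt Ω ≤
      Real.exp (1 - W.nuD Ω 1 p ^ (1 / p) * r) := by
  have hb := W.vbdry_nonempty hne hproper
  refine div_le_of_le_mul₀ (W.swt_nonneg Ω) (Real.exp_pos _).le ?_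
  calc W.swt (Ω \ W.ball (W.vbdry Ω) r)
      ≤ W.swt {x | ⌊r⌋₊ < W.depth Ω x} := W.swt_mono (W.diff_ball_vbdry_subset hb hr.le)
    _ ≤ W.swt Ω * Real.exp (1 - W.nuD Ω 1 p ^ (1 / p) * (⌊r⌋₊ + 1)) :=
        W.swt_superlevel_le hp (W.depth_le_depth_add_one hb) W.depth_eq_zero ⌊r⌋₊
    _ ≤ W.swt Ω * Real.exp (1 - W.nuD Ω 1 p ^ (1 / p) * r) := by
        gcongr
        · exact W.swt_nonneg Ω
        · exact Real.rpow_nonneg (W.nuD_nonneg Ω p 1) _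
        · exact (Nat.lt_floor_add_one r).le
    _ = Real.exp (1 - W.nuD Ω 1 p ^ (1 / p) * r) * W.swt Ω := mul_comm _ _
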